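/- Let λ₁ < λ₂ be real numbers with λ₁ > 0, let f(t) = λ₁ + (λ₂ − λ₁)·(2·arctan t + π)/(2π), and let σ(t) = (f(t)·cos t, f(t)·sin t). Let C₁ and C₂ denote the circles in ℝ² of radius λ₁ and λ₂ centered at the origin. Then the closure of σ(ℝ) in ℝ² equals σ(ℝ) ∪ C₁ ∪ C₂, and the three sets σ(ℝ), C₁, C₂ are pairwise disjoint. In particular σ(ℝ) is not a closed subset of ℝ² (the spiral is a non-proper curve in the plane whose closure decomposes into three disjoint leaves). -/

import Mathlib

open Real Set

/-!
A continuous curve accumulates, besides its own points, only where it clusters as its parameter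
leaves every compact set, that is, at `-∞` or at `+∞`. At each end the spiral is asymptotic to a
uniformly parametrized circle; a periodic curve comes back to each of its points infinitely often,
so a curve asymptotic to it clusters exactly along its (compact) image. The leaves are told apart
by the norm, which lies strictly between the two radii along the spiral.
-/

open Filter Metric Topology

section ClusterPoints

theorem mem_closure_range_of_mapClusterPt {ι X : Type*} [TopologicalSpace X] {l : Filter ι}
    {u : ι → X} {x : X} (h : MapClusterPt x l u) : x ∈ closure (range u) :=
  mem_closure_iff_clusterPt.2 (h.clusterPt.mono (le_principal_iff.2 range_mem_map))

theorem closure_range_eq_range_union_mapClusterPt_cocompact {X Y : Type*} [TopologicalSpace X]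
    [TopologicalSpace Y] [T2Space Y] {u : X → Y} (hu : Continuous u) :
    closure (range u) = range u ∪ {y | MapClusterPt y (cocompact X) u} := by
  refine Subset.antisymm (fun y hy => or_iff_not_imp_right.2 fun hnot => ?_)
    (union_subset subset_closure fun y hy => ?_)
  · obtain ⟨s, hs, hfreq⟩ : ∃ s ∈ 𝓝 y, ¬ ∃ᶠ x in cocompact X, u x ∈ s := by
      simpa only [mem_ofPred_eq, mapClusterPt_iff_frequently, not_forall, exists_prop] using hnot
    obtain ⟨K, hK, hKs⟩ := mem_cocompact.1 (not_frequently.1 hfreq)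
    have hyK : y ∈ closure (u '' K) := mem_closure_iff_nhds.2 fun t ht => by
      obtain ⟨_, ⟨hxs, hxt⟩, x, rfl⟩ := mem_closure_iff_nhds.1 hy (s ∩ t) (inter_mem hs ht)
      exact ⟨u x, hxt, x, by_contra fun hxK => hKs hxK hxs, rfl⟩
    rw [(hK.image hu).isClosed.closure_eq] at hyK
    exact image_subset_range u K hyK
  · exact mem_closure_range_of_mapClusterPt hy

variable {ι E : Type*} {l : Filter ι} {u v : ι → E} {x : E}

theorem mapClusterPt_congr_of_tendsto_dist [PseudoMetricSpace E]
    (h : Tendsto (fun i => dist (u i) (v i)) l (𝓝 0)) :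
    MapClusterPt x l u ↔ MapClusterPt x l v := by
  simp only [mapClusterPt_iff_ultrafilter]
  exact exists_congr fun U => and_congr_right fun hU => tendsto_iff_of_dist (h.mono_left hU)

theorem mapClusterPt_iff_mem_range_of_frequently_eq [TopologicalSpace E]
    (hclosed : IsClosed (range v)) (hfreq : ∀ i, ∃ᶠ j in l, v j = v i) :
    MapClusterPt x l v ↔ x ∈ range v := by
  refine ⟨fun h => ?_, ?_⟩
  · rw [← hclosed.closure_eq]
    exact mem_closure_range_of_mapClusterPt h
  · rintro ⟨i, rfl⟩
    exact mapClusterPt_iff_frequently.2 fun s hs =>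
      (hfreq i).mono fun j hj => hj ▸ mem_of_mem_nhds hs

end ClusterPoints

section AsymptoticallyPeriodic

variable {G α : Type*} [AddCommGroup G] [LinearOrder G] [IsOrderedAddMonoid G] [Archimedean G]
  {γ : G → α} {c : G}

theorem frequently_atTop_eq_of_periodic (hγ : Function.Periodic γ c) (hc : 0 < c) (s : G) :
    ∃ᶠ t in atTop, γ t = γ s := by
  refine frequently_atTop.2 fun a => ?_
  obtain ⟨t, ht, hst⟩ := hγ.exists_mem_Ico hc s a
  exact ⟨t, ht.1, hst.symm⟩

theorem frequently_atBot_eq_of_periodic (hγ : Function.Periodic γ c) (hc : 0 < c) (s : G) :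
    ∃ᶠ t in atBot, γ t = γ s := by
  refine frequently_atBot.2 fun a => ?_
  obtain ⟨t, ht, hst⟩ := hγ.exists_mem_Ioc hc s (a - c)
  exact ⟨t, by simpa only [sub_add_cancel] using ht.2, hst.symm⟩

theorem closure_range_eq_of_asymptotic_periodic {E : Type*} [MetricSpace E]
    {σ γ₁ γ₂ : ℝ → E} {c₁ c₂ : ℝ} (hσ : Continuous σ) (hγ₁ : Continuous γ₁) (hγ₂ : Continuous γ₂)
    (hc₁ : 0 < c₁) (hc₂ : 0 < c₂)
    (hper₁ : Function.Periodic γ₁ c₁) (hper₂ : Function.Periodic γ₂ c₂)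
    (hbot : Tendsto (fun t => dist (σ t) (γ₁ t)) atBot (𝓝 0))
    (htop : Tendsto (fun t => dist (σ t) (γ₂ t)) atTop (𝓝 0)) :
    closure (range σ) = range σ ∪ range γ₁ ∪ range γ₂ := by
  have hcluster₁ (x : E) : MapClusterPt x atBot σ ↔ x ∈ range γ₁ :=
    (mapClusterPt_congr_of_tendsto_dist hbot).trans <|
      mapClusterPt_iff_mem_range_of_frequently_eq
        (hper₁.compact_of_continuous hc₁.ne' hγ₁).isClosed
        (frequently_atBot_eq_of_periodic hper₁ hc₁)
  have hcluster₂ (x : E) : MapClusterPt x atTop σ ↔ x ∈ range γ₂ :=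
    (mapClusterPt_congr_of_tendsto_dist htop).trans <|
      mapClusterPt_iff_mem_range_of_frequently_eq
        (hper₂.compact_of_continuous hc₂.ne' hγ₂).isClosed
        (frequently_atTop_eq_of_periodic hper₂ hc₂)
  have hends : {x | MapClusterPt x (cocompact ℝ) σ} = range γ₁ ∪ range γ₂ := by
    ext x
    rw [mem_ofPred_eq, cocompact_eq_atBot_atTop, mapClusterPt_def, map_sup, clusterPt_sup,
      ← mapClusterPt_def, ← mapClusterPt_def, hcluster₁, hcluster₂, mem_union]
  rw [closure_range_eq_range_union_mapClusterPt_cocompact hσ, hends, union_assoc]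

end AsymptoticallyPeriodic

section PolarCoordinates

/-- The point of the Euclidean plane with polar coordinates `(r, t)`. It is transported from
Mathlib's `circleMap` in `ℂ`, so that its properties follow from those of `circleMap`; negative
radii are allowed. -/
noncomputable def polarPoint (r t : ℝ) : EuclideanSpace ℝ (Fin 2) :=
  Complex.orthonormalBasisOneI.repr (circleMap 0 r t)

theorem ofLp_polarPoint (r t : ℝ) : (polarPoint r t).ofLp = ![r * cos t, r * sin t] := by
  rw [polarPoint, Complex.orthonormalBasisOneI_repr_apply, circleMap_zero_re, circleMap_zero_im]

theorem continuous_polarPoint {X : Type*} [TopologicalSpace X] {r θ : X → ℝ}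
    (hr : Continuous r) (hθ : Continuous θ) : Continuous fun x => polarPoint (r x) (θ x) := by
  unfold polarPoint circleMap
  fun_prop

theorem periodic_polarPoint (r : ℝ) : Function.Periodic (polarPoint r) (2 * π) :=
  (periodic_circleMap 0 r).comp Complex.orthonormalBasisOneI.repr

theorem range_polarPoint (r : ℝ) : range (polarPoint r) = sphere 0 |r| := by
  calc range (polarPoint r)
      = Complex.orthonormalBasisOneI.repr '' range (circleMap 0 r) := range_comp _ _
    _ = sphere 0 |r| := by rw [range_circleMap, LinearIsometryEquiv.image_sphere, map_zero]

theorem norm_polarPoint (r t : ℝ) : ‖polarPoint r t‖ = |r| := by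
  rw [polarPoint, LinearIsometryEquiv.norm_map, norm_circleMap_zero]

theorem dist_polarPoint (r s t : ℝ) : dist (polarPoint r t) (polarPoint s t) = |r - s| := by
  have hsub : circleMap 0 r t - circleMap 0 s t = circleMap 0 (r - s) t := by
    simp only [circleMap_zero, Complex.ofReal_sub, sub_mul]
  rw [polarPoint, polarPoint, LinearIsometryEquiv.dist_map, dist_eq_norm, hsub,
    norm_circleMap_zero]

theorem closure_range_polarPoint_eq {f : ℝ → ℝ} {a b : ℝ} (hf : Continuous f)
    (hbot : Tendsto f atBot (𝓝 a)) (htop : Tendsto f atTop (𝓝 b)) :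
    closure (range fun t => polarPoint (f t) t) =
      (range fun t => polarPoint (f t) t) ∪ sphere 0 |a| ∪ sphere 0 |b| := by
  have hdist {l : Filter ℝ} {r : ℝ} (h : Tendsto f l (𝓝 r)) :
      Tendsto (fun t => dist (polarPoint (f t) t) (polarPoint r t)) l (𝓝 0) := by
    simpa only [dist_polarPoint, Real.dist_eq] using tendsto_iff_dist_tendsto_zero.1 h
  rw [← range_polarPoint a, ← range_polarPoint b]
  exact closure_range_eq_of_asymptotic_periodic (continuous_polarPoint hf continuous_id)
    (continuous_polarPoint continuous_const continuous_id)
    (continuous_polarPoint continuous_const continuous_id) two_pi_pos two_pi_pos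
    (periodic_polarPoint a) (periodic_polarPoint b) (hdist hbot) (hdist htop)

end PolarCoordinates

section ArctanProfile

/-- The radius of the spiral as a function of the angle: `arctan` rescaled to increase from
`a` to `b` when `a < b`. -/
noncomputable def arctanProfile (a b t : ℝ) : ℝ :=
  a + (b - a) * (2 * arctan t + π) / (2 * π)

theorem continuous_arctanProfile (a b : ℝ) : Continuous (arctanProfile a b) := by
  unfold arctanProfile
  fun_prop

theorem arctanProfile_mem_Ioo {a b : ℝ} (hab : a < b) (t : ℝ) :
    arctanProfile a b t ∈ Ioo a b := by
  have hd : 0 < b - a := sub_pos.2 hab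
  have hpos : 0 < 2 * arctan t + π := by linarith [neg_pi_div_two_lt_arctan t]
  have hlt : 2 * arctan t + π < 2 * π := by linarith [arctan_lt_pi_div_two t]
  constructor
  · exact lt_add_of_pos_right a (div_pos (mul_pos hd hpos) two_pi_pos)
  · calc arctanProfile a b t < a + (b - a) * (2 * π) / (2 * π) := by
          unfold arctanProfile
          gcongr
      _ = b := by
          rw [mul_div_cancel_right₀ _ two_pi_pos.ne', add_sub_cancel]

theorem tendsto_arctanProfile {l : Filter ℝ} {θ : ℝ} (a b : ℝ) (h : Tendsto arctan l (𝓝 θ)) :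
    Tendsto (arctanProfile a b) l (𝓝 (a + (b - a) * (2 * θ + π) / (2 * π))) :=
  ((((h.const_mul 2).add_const π).const_mul (b - a)).div_const (2 * π)).const_add a

theorem tendsto_arctanProfile_atBot (a b : ℝ) : Tendsto (arctanProfile a b) atBot (𝓝 a) := by
  convert tendsto_arctanProfile a b (tendsto_nhds_of_tendsto_nhdsWithin tendsto_arctan_atBot)
    using 2
  ring

theorem tendsto_arctanProfile_atTop (a b : ℝ) : Tendsto (arctanProfile a b) atTop (𝓝 b) := by
  convert tendsto_arctanProfile a b (tendsto_nhds_of_tendsto_nhdsWithin tendsto_arctan_atTop)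
    using 2
  field_simp
  ring

end ArctanProfile

theorem spiral_closure_three_leaves_general {a b : ℝ} (ha : 0 ≤ a) {f : ℝ → ℝ}
    (hf : Continuous f) (hmem : ∀ t, f t ∈ Ioo a b)
    (hbot : Tendsto f atBot (𝓝 a)) (htop : Tendsto f atTop (𝓝 b))
    {σ : ℝ → EuclideanSpace ℝ (Fin 2)} (hσ : ∀ t, σ t = ![f t * cos t, f t * sin t]) :
    closure (range σ) = range σ ∪ sphere 0 a ∪ sphere 0 b ∧
      Disjoint (range σ) (sphere 0 a) ∧
      Disjoint (range σ) (sphere 0 b) ∧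
      Disjoint (sphere (0 : EuclideanSpace ℝ (Fin 2)) a) (sphere 0 b) ∧
      ¬ IsClosed (range σ) := by
  obtain rfl : σ = fun t => polarPoint (f t) t :=
    funext fun t => WithLp.ofLp_injective 2 ((hσ t).trans (ofLp_polarPoint (f t) t).symm)
  have hab : a < b := (hmem 0).1.trans (hmem 0).2
  have hnorm (t : ℝ) : ‖polarPoint (f t) t‖ = f t := by
    rw [norm_polarPoint, abs_of_nonneg (ha.trans (hmem t).1.le)]
  have hclosure := closure_range_polarPoint_eq hf hbot htop
  rw [abs_of_nonneg ha, abs_of_nonneg (ha.trans hab.le)] at hclosure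
  have hdisj {r : ℝ} (hr : r ∉ Ioo a b) :
      Disjoint (range fun t => polarPoint (f t) t) (sphere 0 r) := by
    refine Set.disjoint_left.2 ?_
    rintro _ ⟨t, rfl⟩ ht
    rw [mem_sphere_zero_iff_norm, hnorm] at ht
    exact hr (ht ▸ hmem t)
  have hdisj_a := hdisj (r := a) fun h => h.1.false
  refine ⟨hclosure, hdisj_a, hdisj fun h => h.2.false, ?_, fun hclosed => ?_⟩
  · exact Set.disjoint_left.2 fun x hxa hxb => hab.ne (hxa.symm.trans hxb)
  · obtain ⟨x, hx⟩ : (sphere (0 : EuclideanSpace ℝ (Fin 2)) a).Nonempty :=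
      NormedSpace.sphere_nonempty.2 ha
    have hx_range : x ∈ range fun t => polarPoint (f t) t := by
      rw [← hclosed.closure_eq, hclosure]
      exact Or.inl (Or.inr hx)
    exact Set.disjoint_left.1 hdisj_a hx_range hx

/-- For `0 < λ₁ < λ₂`, let `σ` be the spiral
`σ t = (f t * cos t, f t * sin t)` with
`f t = λ₁ + (λ₂ − λ₁) * (2 * arctan t + π) / (2 * π)`, and let `C₁`, `C₂` be the circles
of radius `λ₁`, `λ₂` centered at the origin of the Euclidean plane. Then the closure of
the spiral equals `σ(ℝ) ∪ C₁ ∪ C₂`, the three sets `σ(ℝ)`, `C₁`, `C₂` are pairwise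
disjoint, and `σ(ℝ)` is not closed in the plane. -/
theorem spiral_closure_three_leaves (lam1 lam2 : ℝ) (h1 : 0 < lam1) (hlt : lam1 < lam2)
    (f : ℝ → ℝ)
    (hf : ∀ t : ℝ, f t = lam1 + (lam2 - lam1) * (2 * Real.arctan t + π) / (2 * π))
    (σ : ℝ → EuclideanSpace ℝ (Fin 2))
    (hσ : ∀ t : ℝ, σ t = ![f t * Real.cos t, f t * Real.sin t])
    (C1 C2 : Set (EuclideanSpace ℝ (Fin 2)))
    (hC1 : C1 = {x : EuclideanSpace ℝ (Fin 2) | ‖x‖ = lam1})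
    (hC2 : C2 = {x : EuclideanSpace ℝ (Fin 2) | ‖x‖ = lam2}) :
    closure (Set.range σ) = Set.range σ ∪ C1 ∪ C2 ∧
      Disjoint (Set.range σ) C1 ∧
      Disjoint (Set.range σ) C2 ∧
      Disjoint C1 C2 ∧
      ¬ IsClosed (Set.range σ) := by
  obtain rfl : f = arctanProfile lam1 lam2 := funext hf
  simpa only [hC1, hC2, sphere, dist_zero_right] using
    spiral_closure_three_leaves_general h1.le (continuous_arctanProfile lam1 lam2)
      (arctanProfile_mem_Ioo hlt) (tendsto_arctanProfile_atBot lam1 lam2)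
      (tendsto_arctanProfile_atTop lam1 lam2) hσ
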